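/- arXiv:1409.4230 — 3 statements merged into one kernel-verified Lean document; each statement's English description precedes it below -/
import Mathlib

section
/- Let E be a finite-dimensional real vector space, A : E → E an ℝ-linear endomorphism and f : E → ℝ a linear functional. The homogeneous linear loop program P(A,f) is non-terminating (NT) on some input if and only if it is asymptotically non-terminating (ANT) on some input; that is, the set NT(P(A,f)) is nonempty if and only if the set ANT(P(A,f)) is nonempty. -/
section Loop

variable {α : Type*} (T : α → α) (s : Set α)

/-- The set of non-terminating (NT) inputs of the loop `while (x ∈ s) { x := T x }`. The program
`P(A, f)` is the case where `T` is `A` and the guard `s` is the open half-space `f > 0`. -/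
def nonterminatingInputs : Set α :=
  {x | ∀ k : ℕ, T^[k] x ∈ s}

/-- The set of asymptotically non-terminating (ANT) inputs of the loop
`while (x ∈ s) { x := T x }`: the guard holds from some iterate on. The orbit is followed even
past iterates violating the guard, so that the loop itself may stop on such an input. -/
def asymptoticallyNonterminatingInputs : Set α :=
  {x | ∃ k₀ : ℕ, ∀ k : ℕ, k₀ ≤ k → T^[k] x ∈ s}

theorem nonterminatingInputs_subset_asymptoticallyNonterminatingInputs :
    nonterminatingInputs T s ⊆ asymptoticallyNonterminatingInputs T s :=
  fun _ hx => ⟨0, fun k _ => hx k⟩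

variable {T s} in
theorem exists_iterate_mem_nonterminatingInputs {x : α}
    (hx : x ∈ asymptoticallyNonterminatingInputs T s) :
    ∃ k₀ : ℕ, T^[k₀] x ∈ nonterminatingInputs T s := by
  obtain ⟨k₀, hk₀⟩ := hx
  refine ⟨k₀, fun k => ?_⟩
  rw [← Function.iterate_add_apply]
  exact hk₀ (k + k₀) (Nat.le_add_left k₀ k)

theorem nt_nonempty_iff_ant_nonempty_general :
    (nonterminatingInputs T s).Nonempty ↔ (asymptoticallyNonterminatingInputs T s).Nonempty := by
  constructor
  · exact Set.Nonempty.mono (nonterminatingInputs_subset_asymptoticallyNonterminatingInputs T s)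
  · rintro ⟨x, hx⟩
    obtain ⟨k₀, hk₀⟩ := exists_iterate_mem_nonterminatingInputs hx
    exact ⟨T^[k₀] x, hk₀⟩

end Loop

/-- The homogeneous linear loop program `P(A,f)`
(`while (f(x) > 0) { x := A x }`) is non-terminating (NT) on some input if and
only if it is asymptotically non-terminating (ANT) on some input:
`NT(P(A,f)) ≠ ∅ ↔ ANT(P(A,f)) ≠ ∅`. -/
theorem nt_nonempty_iff_ant_nonempty
    (E : Type*) [AddCommGroup E] [Module ℝ E] [FiniteDimensional ℝ E]
    (A : E →ₗ[ℝ] E) (f : E →ₗ[ℝ] ℝ) :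
    ({x : E | ∀ k : ℕ, 0 < f ((A ^ k) x)}).Nonempty ↔
      ({x : E | ∃ k₀ : ℕ, ∀ k : ℕ, k₀ ≤ k → 0 < f ((A ^ k) x)}).Nonempty := by
  simp only [Module.End.pow_apply]
  exact nt_nonempty_iff_ant_nonempty_general A {x | 0 < f x}
end

section
/- Let A be an n × n matrix with integer entries (viewed as a linear map on ℝ^n) and let f_1, …, f_r : ℝ^n → ℝ be linear functionals. Then the program P(A,(f_1,…,f_r)) terminates on ℤ^n (i.e. for every x ∈ ℤ^n there exist k ≥ 0 and i ∈ {1,…,r} with f_i(A^k x) ≤ 0) if and only if ANT(P(A,(f_1,…,f_r))) ∩ ℤ^n = ∅. -/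
/-! If `T^[k] x` lies in the guard for all `k ≥ k₀`, then the loop never stops on `T^[k₀] x`. This
point is again in the input set as soon as the latter is stable under `T`, as `ℤ ^ n` is under an
integer matrix. -/

open Filter Set

lemma mapsTo_mulVec_map {m n R S : Type*} [Fintype n] [NonAssocSemiring R] [NonAssocSemiring S]
    (φ : R →+* S) (A : Matrix m n R) :
    MapsTo (A.map φ).mulVec {x | ∀ j, ∃ a, x j = φ a} {y | ∀ i, ∃ a, y i = φ a} := by
  intro x hx i
  choose v hv using hx
  obtain rfl : x = φ ∘ v := funext hv
  exact ⟨A.mulVec v i, (φ.map_mulVec A v i).symm⟩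

/-- The asymptotically non-terminating (ANT) inputs of the loop `while (x ∈ G) { x := T x }`, whose
guard is encoded as the set `G` of the states that pass it. -/
def antInputs {α : Type*} (T : α → α) (G : Set α) : Set α :=
  {x | ∀ᶠ k in atTop, T^[k] x ∈ G}

lemma exists_mem_antInputs_iff_exists_forall_iterate_mem {α : Type*} {T : α → α} {S : Set α}
    (hT : MapsTo T S S) (G : Set α) :
    (∃ x ∈ S, x ∈ antInputs T G) ↔ ∃ x ∈ S, ∀ k, T^[k] x ∈ G := by
  constructor
  · rintro ⟨x, hxS, hx⟩
    obtain ⟨k₀, hk₀⟩ := eventually_atTop.mp hx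
    refine ⟨T^[k₀] x, hT.iterate k₀ hxS, fun k ↦ ?_⟩
    rw [← Function.iterate_add_apply]
    exact hk₀ (k + k₀) (Nat.le_add_left k₀ k)
  · rintro ⟨x, hxS, hx⟩
    exact ⟨x, hxS, Eventually.of_forall hx⟩

theorem integer_termination_iff_ant_inter_lattice_empty_general {α : Type*} {T : α → α}
    {S : Set α} (hT : MapsTo T S S) (G : Set α) :
    (∀ x ∈ S, ∃ k, T^[k] x ∉ G) ↔ antInputs T G ∩ S = ∅ := by
  rw [← disjoint_iff_inter_eq_empty, disjoint_right, ← not_iff_not]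
  push Not
  exact (exists_mem_antInputs_iff_exists_forall_iterate_mem hT G).symm

/-- For an `n × n` integer matrix `A` acting on `ℝ^n` and
linear functionals `f₁,…,f_r`, the program `P(A,(f₁,…,f_r))` terminates on
`ℤ^n` iff `ANT(P(A,(f₁,…,f_r))) ∩ ℤ^n = ∅`. -/
theorem integer_termination_iff_ant_inter_lattice_empty
    (n r : ℕ) (A : Matrix (Fin n) (Fin n) ℤ)
    (f : Fin r → ((Fin n → ℝ) →ₗ[ℝ] ℝ)) :
    (∀ x : Fin n → ℝ, (∀ j, ∃ m : ℤ, x j = (m : ℝ)) →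
        ∃ k : ℕ, ∃ i : Fin r,
          f i ((((A.map (Int.cast : ℤ → ℝ)).mulVecLin) ^ k) x) ≤ 0) ↔
      {x : Fin n → ℝ | ∃ k₀ : ℕ, ∀ k : ℕ, k₀ ≤ k → ∀ i : Fin r,
            0 < f i ((((A.map (Int.cast : ℤ → ℝ)).mulVecLin) ^ k) x)} ∩
          {x : Fin n → ℝ | ∀ j, ∃ m : ℤ, x j = (m : ℝ)} = ∅ := by
  have lattice_stable : MapsTo (A.map (Int.cast : ℤ → ℝ)).mulVecLin
      {x | ∀ j, ∃ m : ℤ, x j = m} {x | ∀ j, ∃ m : ℤ, x j = m} :=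
    mapsTo_mulVec_map (Int.castRingHom ℝ) A
  simpa [antInputs, Module.End.pow_apply] using
    integer_termination_iff_ant_inter_lattice_empty_general lattice_stable {y | ∀ i, 0 < f i y}
end

section
/- Let A be an n × n matrix with integer entries, c ∈ ℤ^n, b = (b_1,…,b_r) ∈ ℝ^r and f_1, …, f_r : ℝ^n → ℝ linear functionals. Let A' : ℝ^n × ℝ → ℝ^n × ℝ be the linear map (x,t) ↦ (A x + t c, t) and f_i' : (x,t) ↦ f_i(x) − t b_i. Then the affine program P(A,(f_1,…,f_r),b,c) terminates on ℤ^n (i.e. for every x ∈ ℤ^n there exist k ≥ 0 and i with f_i(x_k) ≤ b_i, where x_0 = x and x_{k+1} = A x_k + c) if and only if ANT(P(A',(f_1',…,f_r'))) ∩ (ℤ^n × {1}) = ∅. -/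
/-- The orbit `x_0 = x`, `x_{k+1} = A x_k + c` of the affine loop body. -/
def affineIter {E : Type*} [AddCommGroup E] [Module ℝ E]
    (A : E →ₗ[ℝ] E) (c : E) (x : E) : ℕ → E
  | 0 => x
  | k + 1 => A (affineIter A c x k) + c

/-!
The embedding `x ↦ (x, 1)` intertwines the loop body `x ↦ A x + c` with `A'` and turns the guards
`f i x > b i` into `f' i > 0`. A non-terminating input is then an ANT point with threshold `0`.
Conversely, running the program on an ANT point up to its threshold produces a non-terminating
input, which is still a lattice point because `A` and `c` are integral.
-/

open Filter Function Set

/-- The set `ANT(P(B, g))` of inputs on which every guard `g i > 0` eventually holds forever along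
the orbit of `B`. The `g i` are real functions rather than linear functionals. -/
def asymptoticallyNonterminating {V ι : Type*} [AddCommMonoid V] [Module ℝ V]
    (B : Module.End ℝ V) (g : ι → V → ℝ) : Set V :=
  {y | ∃ k₀ : ℕ, ∀ k : ℕ, k₀ ≤ k → ∀ i, 0 < g i ((B ^ k) y)}

theorem exists_forall_iterate_iff_exists_eventually_iterate {α : Type*} {T : α → α} {S : Set α}
    (hT : MapsTo T S S) (p : α → Prop) :
    (∃ x ∈ S, ∀ k, p (T^[k] x)) ↔ ∃ x ∈ S, ∀ᶠ k in atTop, p (T^[k] x) := by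
  constructor
  · rintro ⟨x, hx, hp⟩
    exact ⟨x, hx, .of_forall hp⟩
  · rintro ⟨x, hx, hp⟩
    obtain ⟨k₀, hk₀⟩ := eventually_atTop.1 hp
    refine ⟨T^[k₀] x, hT.iterate k₀ hx, fun k ↦ ?_⟩
    rw [← iterate_add_apply]
    exact hk₀ (k + k₀) (Nat.le_add_left k₀ k)

theorem pow_apply_mk_one_eq_iterate {R E : Type*} [Semiring R] [AddCommMonoid E] [Module R E]
    {A : Module.End R E} {c : E} {A' : Module.End R (E × R)}
    (hA' : ∀ x t, A' (x, t) = (A x + t • c, t)) (k : ℕ) (x : E) :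
    (A' ^ k) (x, 1) = ((fun y ↦ A y + c)^[k] x, 1) := by
  have hsemiconj : Semiconj (fun y ↦ (y, (1 : R))) (fun y ↦ A y + c) A' := fun y ↦ by
    rw [hA', one_smul]
  rw [Module.End.pow_apply]
  exact (hsemiconj.iterate_right k x).symm

theorem mapsTo_mulVecLin_add_intCast {m n R : Type*} [Fintype n] [CommRing R]
    (A : Matrix m n ℤ) (c : m → ℤ) :
    MapsTo (fun x ↦ (A.map (Int.cast : ℤ → R)).mulVecLin x + fun i ↦ (c i : R))
      {x | ∀ j, ∃ z : ℤ, x j = z} {y | ∀ i, ∃ z : ℤ, y i = z} := by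
  intro x hx i
  choose z hz using hx
  obtain rfl : x = fun j ↦ (z j : R) := funext hz
  refine ⟨A.mulVec z i + c i, ?_⟩
  rw [Int.cast_add]
  exact congrArg (· + (c i : R)) ((Int.castRingHom R).map_mulVec A z i).symm

section AffineProgram

variable {E ι : Type*} [AddCommGroup E] [Module ℝ E] {A : E →ₗ[ℝ] E} {c : E}

theorem affineIter_eq_iterate (A : E →ₗ[ℝ] E) (c x : E) (k : ℕ) :
    affineIter A c x k = (fun y ↦ A y + c)^[k] x := by
  induction k with
  | zero => rfl
  | succ k ih => rw [affineIter, ih, iterate_succ_apply']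

theorem mk_one_mem_asymptoticallyNonterminating_iff {b : ι → ℝ} {f : ι → E → ℝ}
    {A' : Module.End ℝ (E × ℝ)} (hA' : ∀ x t, A' (x, t) = (A x + t • c, t))
    {f' : ι → E × ℝ → ℝ} (hf' : ∀ i x t, f' i (x, t) = f i x - t * b i) (x : E) :
    (x, 1) ∈ asymptoticallyNonterminating A' f' ↔
      ∀ᶠ k in atTop, ∀ i, b i < f i ((fun y ↦ A y + c)^[k] x) := by
  simp only [asymptoticallyNonterminating, mem_ofPred_eq, pow_apply_mk_one_eq_iterate hA', hf',
    one_mul, sub_pos, eventually_atTop]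

theorem integer_affine_termination_iff_ant_inter_lattice_empty_general {S : Set E}
    (hS : MapsTo (fun x ↦ A x + c) S S) {b : ι → ℝ} {f : ι → E → ℝ}
    {A' : Module.End ℝ (E × ℝ)} (hA' : ∀ x t, A' (x, t) = (A x + t • c, t))
    {f' : ι → E × ℝ → ℝ} (hf' : ∀ i x t, f' i (x, t) = f i x - t * b i) :
    (∀ x ∈ S, ∃ k i, f i (affineIter A c x k) ≤ b i) ↔
      asymptoticallyNonterminating A' f' ∩ S ×ˢ {1} = ∅ := by
  rw [← not_iff_not]
  calc
    (¬∀ x ∈ S, ∃ k i, f i (affineIter A c x k) ≤ b i)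
      ↔ ∃ x ∈ S, ∀ k, ∀ i, b i < f i ((fun y ↦ A y + c)^[k] x) := by
        push Not
        simp only [affineIter_eq_iterate]
    _ ↔ ∃ x ∈ S, ∀ᶠ k in atTop, ∀ i, b i < f i ((fun y ↦ A y + c)^[k] x) :=
        exists_forall_iterate_iff_exists_eventually_iterate hS fun y ↦ ∀ i, b i < f i y
    _ ↔ ∃ x ∈ S, (x, 1) ∈ asymptoticallyNonterminating A' f' := by
        simp only [mk_one_mem_asymptoticallyNonterminating_iff hA' hf']
    _ ↔ ¬asymptoticallyNonterminating A' f' ∩ S ×ˢ {1} = ∅ := by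
        rw [← Ne, ← nonempty_iff_ne_empty, inter_nonempty]
        simp [and_comm]

end AffineProgram

/-- For an `n × n` integer matrix `A`, `c ∈ ℤ^n`, `b ∈ ℝ^r`
and functionals `f₁,…,f_r`, with `A'(x,t) = (A x + t c, t)` and
`fᵢ'(x,t) = fᵢ(x) - t bᵢ`, the affine program `P(A,(f₁,…,f_r),b,c)` terminates
on `ℤ^n` iff `ANT(P(A',(f₁',…,f_r'))) ∩ (ℤ^n × {1}) = ∅`. -/
theorem integer_affine_termination_iff_ant_inter_lattice_empty
    (n r : ℕ) (A : Matrix (Fin n) (Fin n) ℤ) (c : Fin n → ℤ) (b : Fin r → ℝ)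
    (f : Fin r → ((Fin n → ℝ) →ₗ[ℝ] ℝ))
    (A' : (Fin n → ℝ) × ℝ →ₗ[ℝ] (Fin n → ℝ) × ℝ)
    (hA' : ∀ (x : Fin n → ℝ) (t : ℝ),
      A' (x, t) = ((A.map (Int.cast : ℤ → ℝ)).mulVecLin x + t • fun j => ((c j : ℝ)), t))
    (f' : Fin r → ((Fin n → ℝ) × ℝ →ₗ[ℝ] ℝ))
    (hf' : ∀ (i : Fin r) (x : Fin n → ℝ) (t : ℝ), f' i (x, t) = f i x - t * b i) :
    (∀ x : Fin n → ℝ, (∀ j, ∃ m : ℤ, x j = (m : ℝ)) →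
        ∃ k : ℕ, ∃ i : Fin r,
          f i (affineIter ((A.map (Int.cast : ℤ → ℝ)).mulVecLin)
            (fun j => ((c j : ℝ))) x k) ≤ b i) ↔
      {y : (Fin n → ℝ) × ℝ | ∃ k₀ : ℕ, ∀ k : ℕ, k₀ ≤ k → ∀ i : Fin r,
            0 < f' i ((A' ^ k) y)} ∩
          {y : (Fin n → ℝ) × ℝ | (∀ j, ∃ m : ℤ, y.1 j = (m : ℝ)) ∧ y.2 = 1} = ∅ := by
  exact integer_affine_termination_iff_ant_inter_lattice_empty_general
    (mapsTo_mulVecLin_add_intCast A c) (f := fun i ↦ f i) hA' (f' := fun i ↦ f' i) hf'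
end
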